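/- arXiv:2208.07596 — 3 statements merged into one kernel-verified Lean document; each statement's English description precedes it below -/
import Mathlib

section
/- Let q > 1 be an integer, let χ be a non-principal primitive Dirichlet character modulo q, let k > 1 and ℓ > 0 be real numbers, and let s ∈ ℂ satisfy (1−k)/ℓ < Re(s) < 0. Then the function x ↦ x^{−s−1}·P_{k,ℓ,χ}(x) is integrable on (0,∞) and ∫_0^∞ x^{−s−1}·P_{k,ℓ,χ}(x) dx = Γ(−s)/L(ℓs + k, χ). -/
open Complex

/-- `P χ k ℓ x = ∑_{n=1}^∞ χ(n) μ(n) n^{-k} exp(-x/n^ℓ)`. -/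
noncomputable def P {q : ℕ} (χ : DirichletCharacter ℂ q) (k ℓ x : ℝ) : ℂ :=
  ∑' n : ℕ, χ (n : ZMod q) * (ArithmeticFunction.moebius n : ℂ) *
    (((n : ℝ) ^ (-k) * Real.exp (-x / (n : ℝ) ^ ℓ) : ℝ) : ℂ)

/-!
The Mellin transform of `exp (-p x)` at `z` is `Γ(z) / p ^ z`, so integrating
`∑ aᵢ exp (-pᵢ x)` term by term gives `Γ(z) ∑ aᵢ / pᵢ ^ z`. Absolute convergence of the latter
series is all that is needed: it bounds the integrals of the norms of the terms, and, since
`exp (-u) = O(u ^ (-σ))`, it also makes the series converge for every `x > 0`. For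
`aₙ = f(n) / n ^ w` and `pₙ = 1 / n ^ ℓ` the new series is the L-series of `f` at `w - ℓ z`, which
for `f = χ μ` is the reciprocal of the L-function of `χ`.
-/

open MeasureTheory Set Filter
open scoped LSeries.notation ArithmeticFunction.Moebius

lemma integrable_of_hasSum_of_summable_integral_norm {α ι E : Type*} [MeasurableSpace α]
    [Countable ι] [NormedAddCommGroup E] {ν : Measure α} {f : ι → α → E} {g : α → E}
    (hf : ∀ i, Integrable (f i) ν) (hsum : Summable fun i ↦ ∫ x, ‖f i x‖ ∂ν)
    (hg : ∀ᵐ x ∂ν, HasSum (f · x) (g x)) : Integrable g ν := by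
  have hmeas : AEStronglyMeasurable g ν :=
    aestronglyMeasurable_of_tendsto_ae atTop
      (fun s : Finset ι ↦ Finset.aestronglyMeasurable_fun_sum s fun i _ ↦ (hf i).1) hg
  refine ⟨hmeas, ?_⟩
  calc ∫⁻ x, ‖g x‖ₑ ∂ν
    _ ≤ ∫⁻ x, ∑' i, ‖f i x‖ₑ ∂ν :=
        lintegral_mono_ae <| hg.mono fun x hx ↦ hx.tsum_eq ▸ enorm_tsum_le_tsum_enorm
    _ = ∑' i, ∫⁻ x, ‖f i x‖ₑ ∂ν := lintegral_tsum fun i ↦ (hf i).1.enorm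
    _ = ∑' i, ENNReal.ofReal (∫ x, ‖f i x‖ ∂ν) := by
        simp only [ofReal_integral_norm_eq_lintegral_enorm (hf _)]
    _ < ⊤ := hsum.tsum_ofReal_lt_top

lemma exp_neg_le_rpow_self_div_rpow {σ u : ℝ} (hσ : 0 < σ) (hu : 0 < u) :
    Real.exp (-u) ≤ σ ^ σ / u ^ σ := by
  have h : u / σ ≤ Real.exp (u / σ) := by linarith [Real.add_one_le_exp (u / σ)]
  calc Real.exp (-u) = (Real.exp (u / σ) ^ σ)⁻¹ := by
        rw [← Real.exp_mul, div_mul_cancel₀ u hσ.ne', Real.exp_neg]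
    _ ≤ ((u / σ) ^ σ)⁻¹ := by gcongr
    _ = σ ^ σ / u ^ σ := by rw [Real.div_rpow hu.le hσ.le, inv_div]

lemma mellinConvergent_exp_neg_mul {s : ℂ} (hs : 0 < s.re) {p : ℝ} (hp : 0 < p) :
    MellinConvergent (fun t ↦ (Real.exp (-p * t) : ℂ)) s := by
  have hΓ : MellinConvergent (fun t ↦ (Real.exp (-t) : ℂ)) s := by
    simpa only [MellinConvergent, smul_eq_mul, mul_comm, ofReal_exp, ofReal_neg]
      using GammaIntegral_convergent hs
  simpa only [neg_mul] using (MellinConvergent.comp_mul_left hp).2 hΓ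

lemma integral_norm_cpow_mul_exp_neg_mul {s : ℂ} (hs : 0 < s.re) {p : ℝ} (hp : 0 < p) :
    ∫ t in Ioi (0 : ℝ), ‖(t : ℂ) ^ (s - 1) * (Real.exp (-p * t) : ℂ)‖ =
      Real.Gamma s.re / p ^ s.re := by
  calc ∫ t in Ioi (0 : ℝ), ‖(t : ℂ) ^ (s - 1) * (Real.exp (-p * t) : ℂ)‖
    _ = ∫ t in Ioi (0 : ℝ), t ^ (s.re - 1) * Real.exp (-(p * t)) :=
        setIntegral_congr_fun measurableSet_Ioi fun t ht ↦ by
          simp only [norm_mul, norm_cpow_eq_rpow_re_of_pos ht, sub_re, one_re, norm_real,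
            Real.norm_eq_abs, Real.abs_exp, neg_mul]
    _ = Real.Gamma s.re / p ^ s.re := by
        rw [Real.integral_rpow_mul_exp_neg_mul_Ioi hs hp, one_div, Real.inv_rpow hp.le,
          inv_mul_eq_div]

section ExponentialSeries

variable {ι : Type*} {a : ι → ℂ} {p : ι → ℝ} {s : ℂ}

lemma mellinConvergent_of_hasSum_mul_exp_neg_mul [Countable ι] {F : ℝ → ℂ}
    (hp : ∀ i, a i = 0 ∨ 0 < p i) (hs : 0 < s.re)
    (hF : ∀ t ∈ Ioi (0 : ℝ), HasSum (fun i ↦ a i * (Real.exp (-p i * t) : ℂ)) (F t))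
    (hsum : Summable fun i ↦ ‖a i‖ / p i ^ s.re) : MellinConvergent F s := by
  refine integrable_of_hasSum_of_summable_integral_norm
    (f := fun i (t : ℝ) ↦ (t : ℂ) ^ (s - 1) * (a i * Real.exp (-p i * t))) (fun i ↦ ?_) ?_
    (ae_restrict_of_forall_mem measurableSet_Ioi fun t ht ↦ (hF t ht).mul_left _)
  · rcases hp i with hi | hi
    · simp [hi]
    · exact (mellinConvergent_exp_neg_mul hs hi).const_smul (a i)
  · refine (hsum.mul_left (Real.Gamma s.re)).congr fun i ↦ ?_
    rcases hp i with hi | hi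
    · simp [hi]
    · simp only [mul_left_comm _ (a i), norm_mul (a i), integral_const_mul,
        integral_norm_cpow_mul_exp_neg_mul hs hi]
      ring

lemma summable_mul_exp_neg_mul {σ t : ℝ} (hp : ∀ i, a i = 0 ∨ 0 < p i) (hσ : 0 < σ)
    (hsum : Summable fun i ↦ ‖a i‖ / p i ^ σ) (ht : 0 < t) :
    Summable fun i ↦ a i * (Real.exp (-p i * t) : ℂ) := by
  refine .of_norm_bounded (hsum.mul_left (σ ^ σ / t ^ σ)) fun i ↦ ?_
  rcases hp i with hi | hi
  · simp [hi]
  calc ‖a i * (Real.exp (-p i * t) : ℂ)‖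
    _ = ‖a i‖ * Real.exp (-(p i * t)) := by
        rw [norm_mul, norm_real, Real.norm_eq_abs, Real.abs_exp, neg_mul]
    _ ≤ ‖a i‖ * (σ ^ σ / (p i * t) ^ σ) := by
        gcongr
        exact exp_neg_le_rpow_self_div_rpow hσ (mul_pos hi ht)
    _ = σ ^ σ / t ^ σ * (‖a i‖ / p i ^ σ) := by
        rw [Real.mul_rpow hi.le ht.le]
        ring

lemma hasMellin_tsum_mul_exp_neg_mul [Countable ι] (hp : ∀ i, a i = 0 ∨ 0 < p i) (hs : 0 < s.re)
    (hsum : Summable fun i ↦ ‖a i‖ / p i ^ s.re) :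
    HasMellin (fun t ↦ ∑' i, a i * (Real.exp (-p i * t) : ℂ)) s
      (Gamma s * ∑' i, a i / (p i : ℂ) ^ s) := by
  have hF (t : ℝ) (ht : t ∈ Ioi 0) := (summable_mul_exp_neg_mul hp hs hsum ht).hasSum
  refine ⟨mellinConvergent_of_hasSum_mul_exp_neg_mul hp hs hF hsum, ?_⟩
  rw [← (hasSum_mellin hp hs hF hsum).tsum_eq, ← tsum_mul_left]
  simp only [mul_div_assoc]

end ExponentialSeries

lemma LSeries_term_div_rpow_cpow (f : ℕ → ℂ) (w s : ℂ) (ℓ : ℝ) (n : ℕ) :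
    LSeries.term f w n / (((n : ℝ) ^ (-ℓ) : ℝ) : ℂ) ^ s = LSeries.term f (w - ℓ * s) n := by
  rcases eq_or_ne n 0 with rfl | hn
  · simp
  have hpow : (((n : ℝ) ^ (-ℓ) : ℝ) : ℂ) ^ s = ((n : ℂ) ^ (ℓ * s))⁻¹ := by
    rw [← cpow_mul_ofReal_nonneg n.cast_nonneg, ofReal_natCast, ofReal_neg, neg_mul, cpow_neg]
  rw [LSeries.term_of_ne_zero hn, LSeries.term_of_ne_zero hn, hpow,
    cpow_sub _ _ (Nat.cast_ne_zero.2 hn), div_inv_eq_mul, div_div_eq_mul_div, div_mul_eq_mul_div]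

theorem hasMellin_tsum_LSeries_term_mul_exp {f : ℕ → ℂ} {w s : ℂ} {ℓ : ℝ} (hs : 0 < s.re)
    (hf : LSeriesSummable f (w - ℓ * s)) :
    HasMellin (fun t ↦ ∑' n : ℕ, LSeries.term f w n * (Real.exp (-(n : ℝ) ^ (-ℓ) * t) : ℂ)) s
      (Gamma s * L f (w - ℓ * s)) := by
  have hp (n : ℕ) : LSeries.term f w n = 0 ∨ 0 < (n : ℝ) ^ (-ℓ) := by
    rcases n.eq_zero_or_pos with rfl | hn
    · exact .inl (LSeries.term_zero ..)
    · exact .inr (by positivity)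
  have hsum : Summable fun n : ℕ ↦ ‖LSeries.term f w n‖ / ((n : ℝ) ^ (-ℓ)) ^ s.re := by
    refine hf.norm.congr fun n ↦ ?_
    rw [← LSeries_term_div_rpow_cpow, norm_div]
    rcases hp n with hn | hn
    · simp [hn]
    · rw [norm_cpow_eq_rpow_re_of_pos hn]
  simpa only [LSeries_term_div_rpow_cpow] using! hasMellin_tsum_mul_exp_neg_mul hp hs hsum

section DirichletCharacter

variable {q : ℕ} (χ : DirichletCharacter ℂ q)

lemma P_eq_tsum_LSeries_term (k ℓ x : ℝ) :
    P χ k ℓ x =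
      ∑' n : ℕ, LSeries.term (↗χ * ↗μ) k n * (Real.exp (-(n : ℝ) ^ (-ℓ) * x) : ℂ) := by
  refine tsum_congr fun n ↦ ?_
  have hexp : -x / (n : ℝ) ^ ℓ = -(n : ℝ) ^ (-ℓ) * x := by
    rw [Real.rpow_neg n.cast_nonneg]
    ring
  rw [LSeries.term_def₀ (by simp), hexp, ofReal_mul, ofReal_cpow n.cast_nonneg, ofReal_natCast,
    ofReal_neg, Pi.mul_apply, mul_assoc _ ((n : ℂ) ^ _)]

lemma LSeries_mul_moebius_eq_inv_LFunction [NeZero q] {w : ℂ} (hw : 1 < w.re) :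
    L (↗χ * ↗μ) w = (DirichletCharacter.LFunction χ w)⁻¹ := by
  rw [DirichletCharacter.LFunction_eq_LSeries χ hw]
  exact eq_inv_of_mul_eq_one_right (DirichletCharacter.LSeries.mul_mu_eq_one χ hw)

theorem mellin_of_P_general [NeZero q] {k ℓ : ℝ} {s : ℂ} (hs : s.re < 0)
    (hw : 1 < (ℓ * s + k : ℂ).re) :
    IntegrableOn (fun x : ℝ ↦ (x : ℂ) ^ (-s - 1) * P χ k ℓ x) (Ioi 0) ∧
      ∫ x in Ioi (0 : ℝ), (x : ℂ) ^ (-s - 1) * P χ k ℓ x =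
        Gamma (-s) / DirichletCharacter.LFunction χ (ℓ * s + k) := by
  have hshift : (k : ℂ) - ℓ * -s = ℓ * s + k := by ring
  have hsummable : LSeriesSummable (↗χ * ↗μ) (k - ℓ * -s) :=
    DirichletCharacter.LSeriesSummable_mul χ
      (ArithmeticFunction.LSeriesSummable_moebius_iff.2 (hshift ▸ hw))
  have hP := hasMellin_tsum_LSeries_term_mul_exp (neg_re s ▸ neg_pos.2 hs) hsummable
  simpa only [← P_eq_tsum_LSeries_term, hshift, LSeries_mul_moebius_eq_inv_LFunction χ hw,
    ← div_eq_mul_inv] using! hP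

end DirichletCharacter

theorem mellin_of_P {q : ℕ} [NeZero q] (hq : 1 < q) (χ : DirichletCharacter ℂ q)
    (hχ : χ.IsPrimitive) (hχ1 : χ ≠ 1) (k ℓ : ℝ) (hk : 1 < k) (hℓ : 0 < ℓ)
    (s : ℂ) (hs1 : (1 - k) / ℓ < s.re) (hs2 : s.re < 0) :
    MeasureTheory.IntegrableOn (fun x : ℝ => (x : ℂ) ^ (-s - 1) * P χ k ℓ x)
      (Set.Ioi 0) ∧
    ∫ x in Set.Ioi (0 : ℝ), (x : ℂ) ^ (-s - 1) * P χ k ℓ x =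
      Complex.Gamma (-s) / DirichletCharacter.LFunction χ ((ℓ : ℂ) * s + (k : ℂ)) := by
  have hw : 1 < ((ℓ : ℂ) * s + k).re := by
    rw [add_re, re_ofReal_mul, ofReal_re]
    linarith [(div_lt_iff₀' hℓ).1 hs1]
  exact mellin_of_P_general χ hs2 hw
end

section
/- Let q > 1 be an integer, let χ be a primitive Dirichlet character modulo q, and let m ≥ 2 be an integer such that χ(−1) = (−1)^m. Then ((m−2)!·q^{m−2}·G(χ))/(2^{m−1}·π^{m−2}·i^{m−2}) · L(m−1, χ̄) = L'(2−m, χ), where L'(·, χ) denotes the derivative of the function s ↦ L(s,χ) and χ̄ is the complex conjugate character of χ. -/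
open Complex

/-- The Gauss sum `G(χ) = ∑_{n=1}^{q} χ(n) e^{2πin/q}`. -/
noncomputable def gaussG {q : ℕ} (χ : DirichletCharacter ℂ q) : ℂ :=
  ∑ n ∈ Finset.Icc 1 q, χ (n : ZMod q) * Complex.exp (2 * Real.pi * I * n / q)

/-!
If `Φ` on `ℤ/N` has the parity of `k`, the functional equation takes the form
`L(1 - s, Φ) = A(s) cos (π (s - k) / 2)`, where `A` is built from `Γ` and the `L`-function of the
discrete Fourier transform of `Φ`. The cosine has a simple zero at `s = k + 1`, so
`L'(-k, Φ) = π A(k + 1) / 2`. For a primitive `χ`, the Fourier transform of `χ` is `χ⁻¹` up to the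
Gauss sum and a sign.
-/

open scoped ZMod

theorem ne_neg_natCast_of_re_pos {s : ℂ} (hs : 0 < s.re) (n : ℕ) : s ≠ -n := by
  rintro rfl
  rw [neg_re, natCast_re, neg_pos] at hs
  exact n.cast_nonneg.not_gt hs

section ZModLFunction

variable {N : ℕ} [NeZero N]

theorem zmod_LFunction_const_mul (c : ℂ) (Φ : ZMod N → ℂ) (s : ℂ) :
    ZMod.LFunction (fun j ↦ c * Φ j) s = c * ZMod.LFunction Φ s := by
  simp only [ZMod.LFunction, Finset.mul_sum, mul_left_comm c, mul_assoc]

theorem sum_dft (Φ : ZMod N → ℂ) : ∑ j, 𝓕 Φ j = N * Φ 0 := by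
  simp only [← ZMod.dft_apply_zero, ZMod.dft_dft, neg_zero, smul_eq_mul]

theorem differentiableAt_LFunction_dft (Φ : ZMod N → ℂ) {s : ℂ} (h : Φ 0 = 0 ∨ s ≠ 1) :
    DifferentiableAt ℂ (ZMod.LFunction (𝓕 Φ)) s :=
  ZMod.differentiableAt_LFunction _ s <| h.symm.imp_right fun h₀ ↦ by rw [sum_dft, h₀, mul_zero]

theorem exp_add_neg_one_pow_mul_exp_neg (k : ℕ) (s : ℂ) :
    cexp (Real.pi * I * s / 2) + (-1) ^ k * cexp (-Real.pi * I * s / 2) =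
      2 * I ^ k * cos (Real.pi * (s - k) / 2) := by
  have hI : I ^ k = cexp (k * (Real.pi / 2 * I)) := by rw [exp_nat_mul, exp_pi_div_two_mul_I]
  have hpos : I ^ k * cexp (Real.pi * (s - k) / 2 * I) = cexp (Real.pi * I * s / 2) := by
    rw [hI, ← exp_add]
    ring_nf
  have hneg : I ^ k * cexp (-Real.pi * I * s / 2 + k * (Real.pi / 2 * I)) =
      (-1) ^ k * cexp (-Real.pi * I * s / 2) := by
    rw [exp_add, ← hI, ← I_mul_I, mul_pow]
    ring
  rw [cos, ← hpos, ← hneg]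
  ring_nf

/-- The factor multiplying `cos (π (s - k) / 2)` in the functional equation at `1 - s` of the
`L`-function of a map `Φ` on `ℤ/N` with `Φ (-j) = (-1) ^ k * Φ j`. -/
noncomputable def oneSubFactor (Φ : ZMod N → ℂ) (k : ℕ) (s : ℂ) : ℂ :=
  2 * I ^ k * N ^ (s - 1) * (2 * Real.pi) ^ (-s) * Gamma s * ZMod.LFunction (𝓕 Φ) s

theorem LFunction_one_sub_eq_oneSubFactor_mul_cos {Φ : ZMod N → ℂ} {k : ℕ}
    (hΦ : ∀ j, Φ (-j) = (-1) ^ k * Φ j) {s : ℂ} (hs : ∀ n : ℕ, s ≠ -n) (h : Φ 0 = 0 ∨ s ≠ 1) :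
    ZMod.LFunction Φ (1 - s) = oneSubFactor Φ k s * cos (Real.pi * (s - k) / 2) := by
  rw [ZMod.LFunction_one_sub Φ hs h, funext hΦ, ZMod.dft_const_mul, oneSubFactor]
  simp only [zmod_LFunction_const_mul]
  linear_combination (N ^ (s - 1) * (2 * Real.pi) ^ (-s) * Gamma s * ZMod.LFunction (𝓕 Φ) s) *
    exp_add_neg_one_pow_mul_exp_neg k s

theorem differentiableAt_oneSubFactor (Φ : ZMod N → ℂ) (k : ℕ) {s : ℂ} (hs : ∀ n : ℕ, s ≠ -n)
    (h : Φ 0 = 0 ∨ s ≠ 1) : DifferentiableAt ℂ (oneSubFactor Φ k) s := by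
  have hN : DifferentiableAt ℂ (fun s : ℂ ↦ (N : ℂ) ^ (s - 1)) s :=
    .const_cpow (by fun_prop) (.inl (NeZero.ne _))
  have hpi : DifferentiableAt ℂ (fun s : ℂ ↦ (2 * Real.pi : ℂ) ^ (-s)) s :=
    .const_cpow (by fun_prop)
      (.inl <| mul_ne_zero two_ne_zero <| ofReal_ne_zero.mpr Real.pi_ne_zero)
  exact (((hN.const_mul _).mul hpi).mul (differentiableAt_Gamma s hs)).mul
    (differentiableAt_LFunction_dft Φ h)

theorem oneSubFactor_natCast_add_one (Φ : ZMod N → ℂ) (k : ℕ) :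
    oneSubFactor Φ k (k + 1) =
      k.factorial * (N * I) ^ k / (2 ^ k * Real.pi ^ (k + 1)) * ZMod.LFunction (𝓕 Φ) (k + 1) := by
  have hpi : (2 * Real.pi : ℂ) ^ (-(k + 1 : ℂ)) = ((2 * Real.pi : ℂ) ^ (k + 1))⁻¹ := by
    rw [cpow_neg, ← Nat.cast_add_one, cpow_natCast]
  rw [oneSubFactor, add_sub_cancel_right, cpow_natCast, hpi, Gamma_nat_eq_factorial, mul_pow,
    mul_pow]
  field_simp
  ring

theorem hasDerivAt_cos_pi_mul_sub_div_two (a : ℂ) :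
    HasDerivAt (fun s ↦ cos (Real.pi * (s - a) / 2)) (-(Real.pi / 2)) (a + 1) := by
  have hlin : HasDerivAt (fun s ↦ Real.pi * (s - a) / 2) (Real.pi * 1 / 2) (a + 1) :=
    (((hasDerivAt_id _).sub_const _).const_mul _).div_const _
  refine hlin.ccos.congr_deriv ?_
  rw [add_sub_cancel_left, mul_one, sin_pi_div_two, neg_one_mul]

theorem deriv_LFunction_neg_natCast {Φ : ZMod N → ℂ} {k : ℕ}
    (hΦ : ∀ j, Φ (-j) = (-1) ^ k * Φ j) (h : Φ 0 = 0 ∨ k ≠ 0) :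
    deriv (ZMod.LFunction Φ) (-k) =
      k.factorial * (N * I) ^ k / (2 ^ (k + 1) * Real.pi ^ k) * ZMod.LFunction (𝓕 Φ) (k + 1) := by
  have hre : 0 < (k + 1 : ℂ).re := by
    rw [← Nat.cast_add_one, natCast_re]
    positivity
  have hone : Φ 0 = 0 ∨ (k + 1 : ℂ) ≠ 1 := h.imp_right (by simpa using ·)
  have hequation : (fun s ↦ ZMod.LFunction Φ (1 - s)) =ᶠ[nhds (k + 1 : ℂ)]
      oneSubFactor Φ k * fun s ↦ cos (Real.pi * (s - k) / 2) := by
    have hne : ∀ᶠ s in nhds (k + 1 : ℂ), Φ 0 = 0 ∨ s ≠ 1 :=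
      hone.elim (fun h₀ ↦ .of_forall fun _ ↦ .inl h₀)
        fun h₁ ↦ (eventually_ne_nhds h₁).mono fun _ ↦ .inr
    filter_upwards [continuous_re.continuousAt.tendsto.eventually_const_lt hre, hne] with s hs hs'
    exact LFunction_one_sub_eq_oneSubFactor_mul_cos hΦ (ne_neg_natCast_of_re_pos hs) hs'
  have hfactor := (differentiableAt_oneSubFactor Φ k (ne_neg_natCast_of_re_pos hre) hone).hasDerivAt
  have hproduct := hfactor.mul (hasDerivAt_cos_pi_mul_sub_div_two k)
  have hderiv := (hproduct.congr_of_eventuallyEq hequation).deriv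
  rw [deriv_comp_const_sub, sub_add_cancel_right, add_sub_cancel_left, mul_one, cos_pi_div_two,
    mul_zero, zero_add, oneSubFactor_natCast_add_one, mul_neg, neg_inj] at hderiv
  rw [hderiv, pow_succ, pow_succ]
  field_simp

end ZModLFunction

section GaussSum

variable {q : ℕ} [NeZero q]

theorem sum_Ico_natCast_zmod {M : Type*} [AddCommMonoid M] (a : ℕ) (f : ZMod q → M) :
    ∑ n ∈ Finset.Ico a (a + q), f n = ∑ x, f x := by
  have hinj : Set.InjOn (Nat.cast : ℕ → ZMod q) (Finset.Ico a (a + q)) := by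
    intro m hm n hn hmn
    rw [Finset.coe_Ico, Set.mem_Ico] at hm hn
    refine ((ZMod.natCast_eq_natCast_iff m n q).mp hmn).eq_of_abs_lt ?_
    rw [abs_lt]
    omega
  have himage : (Finset.Ico a (a + q)).image (Nat.cast : ℕ → ZMod q) = Finset.univ := by
    rw [← Finset.card_eq_iff_eq_univ, Finset.card_image_of_injOn hinj, Nat.card_Ico,
      Nat.add_sub_cancel_left, ZMod.card]
  rw [← himage, Finset.sum_image hinj]

theorem gaussG_eq_gaussSum (χ : DirichletCharacter ℂ q) :
    gaussG χ = gaussSum χ ZMod.stdAddChar := by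
  rw [gaussG, gaussSum, ← sum_Ico_natCast_zmod 1, add_comm 1 q, ← Finset.Ico_add_one_right_eq_Icc]
  simp only [ZMod.stdAddChar_apply, ZMod.toCircle_natCast]

theorem dft_eq_gaussG_mul_inv {χ : DirichletCharacter ℂ q} (hχ : χ.IsPrimitive) :
    𝓕 (χ : ZMod q → ℂ) = fun j ↦ χ⁻¹ (-1) * gaussG χ * χ⁻¹ j := by
  ext j
  rw [hχ.fourierTransform_eq_inv_mul_gaussSum, ← neg_one_mul j, map_mul, gaussG_eq_gaussSum]
  ring

end GaussSum

theorem ringHomComp_starRingEnd_eq_inv {R : Type*} [CommRing R] [Finite R] (χ : MulChar R ℂ) :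
    χ.ringHomComp (starRingEnd ℂ) = χ⁻¹ :=
  χ.star_eq_inv

theorem deriv_L_at_nonpositive_integers_general {q : ℕ} [NeZero q]
    (χ : DirichletCharacter ℂ q) (hχ : χ.IsPrimitive) (m : ℕ) (hm : 2 ≤ m) (h : 1 < q ∨ 2 < m)
    (hpar : χ (-1 : ZMod q) = (-1 : ℂ) ^ m) :
    ((m - 2).factorial : ℂ) * (q : ℂ) ^ (m - 2) * gaussG χ /
        (2 ^ (m - 1) * (Real.pi : ℂ) ^ (m - 2) * I ^ (m - 2)) *
        DirichletCharacter.LFunction (χ.ringHomComp (starRingEnd ℂ)) ((m : ℂ) - 1) =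
      deriv (DirichletCharacter.LFunction χ) (2 - (m : ℂ)) := by
  obtain ⟨k, rfl⟩ := Nat.exists_eq_add_of_le' hm
  rw [pow_add, neg_one_sq, mul_one] at hpar
  have hχneg (j : ZMod q) : χ (-j) = (-1) ^ k * χ j := by rw [← neg_one_mul j, map_mul, hpar]
  have hχzero : χ 0 = 0 ∨ k ≠ 0 := h.imp (fun hq ↦ χ.map_zero' hq.ne') fun hk ↦ by omega
  have hsign : χ⁻¹ (-1) = (I ^ k * I ^ k)⁻¹ := by
    rw [MulChar.inv_apply_eq_inv', hpar, ← mul_pow, I_mul_I]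
  have hleft : ((k + 2 : ℕ) : ℂ) - 1 = k + 1 := by push_cast; ring
  have hright : 2 - ((k + 2 : ℕ) : ℂ) = -k := by push_cast; ring
  have hderiv : deriv (DirichletCharacter.LFunction χ) (-k) = _ :=
    deriv_LFunction_neg_natCast hχneg hχzero
  rw [hright, hderiv, hleft, dft_eq_gaussG_mul_inv hχ, zmod_LFunction_const_mul,
    ringHomComp_starRingEnd_eq_inv, DirichletCharacter.LFunction, hsign,
    show k + 2 - 1 = k + 1 from rfl, Nat.add_sub_cancel, mul_pow]
  field_simp

theorem deriv_L_at_nonpositive_integers {q : ℕ} [NeZero q] (hq : 1 < q)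
    (χ : DirichletCharacter ℂ q) (hχ : χ.IsPrimitive) (m : ℕ) (hm : 2 ≤ m)
    (hpar : χ (-1 : ZMod q) = (-1 : ℂ) ^ m) :
    ((m - 2).factorial : ℂ) * (q : ℂ) ^ (m - 2) * gaussG χ /
        (2 ^ (m - 1) * (Real.pi : ℂ) ^ (m - 2) * I ^ (m - 2)) *
        DirichletCharacter.LFunction (χ.ringHomComp (starRingEnd ℂ)) ((m : ℂ) - 1) =
      deriv (DirichletCharacter.LFunction χ) (2 - (m : ℂ)) :=
  deriv_L_at_nonpositive_integers_general χ hχ m hm (.inl hq) hpar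
end

section
/- Let x > 0 and let c be a real number with −1 < c < 0. Then the function t ↦ Γ(c + it)·x^{−(c+it)} is integrable on ℝ and e^{−x} − 1 = (1/(2π)) ∫_{−∞}^{∞} Γ(c + it)·x^{−(c+it)} dt. -/
open Complex

/-!
Integration by parts shows `mellin f' (s + 1) = -s • mellin f s`, and the remainder after `n + 1`
terms of the exponential series at `-x` differentiates to minus the remainder after `n` terms.
Starting from Euler's integral, the functional equation of `Γ` therefore propagates the identity
`mellin (remainder after n terms) = Γ` leftwards, one strip between consecutive poles at a time.
Along every vertical line avoiding the poles `Γ` is integrable, since it decays quadratically to the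
right of `0` and `Γ s = Γ (s + 1) / s`, so Mellin inversion applies.
-/

open MeasureTheory Set Filter Asymptotics Topology
open scoped Nat

section MellinOfDeriv

variable {E : Type*} [NormedAddCommGroup E] [NormedSpace ℂ E]

theorem exp_smul_cpow_sub_one_smul (u : ℝ) (s : ℂ) (v : E) :
    Real.exp u • ((Real.exp u : ℝ) : ℂ) ^ (s - 1) • v = cexp (s * u) • v := by
  have exp_ne_zero : ((Real.exp u : ℝ) : ℂ) ≠ 0 := ofReal_ne_zero.mpr (Real.exp_ne_zero u)
  rw [← coe_smul, smul_smul, cpow_def_of_ne_zero exp_ne_zero, ← ofReal_log (Real.exp_pos u).le,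
    Real.log_exp, ofReal_exp, ← Complex.exp_add]
  ring_nf

theorem mellin_eq_integral_comp_exp (f : ℝ → E) (s : ℂ) :
    mellin f s = ∫ u : ℝ, cexp (s * u) • f (Real.exp u) := by
  rw [mellin, ← Real.range_exp, ← image_univ, integral_image_eq_integral_abs_deriv_smul
    MeasurableSet.univ (fun u _ ↦ (Real.hasDerivAt_exp u).hasDerivWithinAt)
    Real.exp_injective.injOn]
  simp only [Real.abs_exp, exp_smul_cpow_sub_one_smul, setIntegral_univ]

theorem mellinConvergent_iff_integrable_comp_exp (f : ℝ → E) (s : ℂ) :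
    MellinConvergent f s ↔ Integrable fun u : ℝ ↦ cexp (s * u) • f (Real.exp u) := by
  rw [MellinConvergent, ← Real.range_exp, ← image_univ,
    integrableOn_image_iff_integrableOn_abs_deriv_smul
      MeasurableSet.univ (fun u _ ↦ (Real.hasDerivAt_exp u).hasDerivWithinAt)
      Real.exp_injective.injOn]
  simp only [Real.abs_exp, exp_smul_cpow_sub_one_smul, integrableOn_univ]

/- After the substitution `t = exp u` the boundary terms vanish because a function on the line which
is integrable together with its derivative tends to `0` at both ends. -/
theorem mellin_add_one_of_hasDerivAt {f f' : ℝ → E} {s : ℂ}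
    (hderiv : ∀ t, 0 < t → HasDerivAt f (f' t) t) (hf : MellinConvergent f s)
    (hf' : MellinConvergent f' (s + 1)) : mellin f' (s + 1) = -s • mellin f s := by
  rw [mellinConvergent_iff_integrable_comp_exp] at hf hf'
  have hasDerivAt_comp_exp (u : ℝ) : HasDerivAt (fun u : ℝ ↦ cexp (s * u) • f (Real.exp u))
      (cexp ((s + 1) * u) • f' (Real.exp u) + s • cexp (s * u) • f (Real.exp u)) u := by
    have hexp : HasDerivAt (fun u : ℝ ↦ cexp (s * u)) (cexp (s * u) * s) u := by
      simpa using ((hasDerivAt_id (u : ℂ)).const_mul s).cexp.comp_ofReal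
    have hcomp := (hderiv _ (Real.exp_pos u)).scomp u (Real.hasDerivAt_exp u)
    convert! hexp.smul hcomp using 1
    rw [add_mul, one_mul, Complex.exp_add, ← ofReal_exp, mul_smul, coe_smul, smul_smul,
      mul_comm s (cexp _), Function.comp_apply]
  have integral_eq_zero := integral_eq_zero_of_hasDerivAt_of_integrable hasDerivAt_comp_exp
    (hf'.add (hf.smul s)) hf
  rw [integral_add hf' (hf.fun_smul s), integral_smul, ← mellin_eq_integral_comp_exp,
    ← mellin_eq_integral_comp_exp] at integral_eq_zero
  rw [neg_smul, eq_neg_of_add_eq_zero_left integral_eq_zero]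

end MellinOfDeriv

/-- The remainder of the exponential series at `-x` after the `n` terms of degree less than `n`. -/
noncomputable def expNegRemainder (n : ℕ) (x : ℝ) : ℝ :=
  Real.exp (-x) - ∑ k ∈ Finset.range n, (-x) ^ k / k !

theorem hasDerivAt_expNegRemainder_succ (n : ℕ) (x : ℝ) :
    HasDerivAt (expNegRemainder (n + 1)) (-expNegRemainder n x) x := by
  have hasDerivAt_term (k : ℕ) :
      HasDerivAt (fun x : ℝ ↦ (-x) ^ (k + 1) / (k + 1)!) (-((-x) ^ k / k !)) x := by
    convert! ((hasDerivAt_neg x).pow (k + 1)).div_const ((k + 1)! : ℝ) using 1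
    rw [Nat.factorial_succ]
    push_cast
    field_simp
  have hasDerivAt_sum := HasDerivAt.fun_sum fun k (_ : k ∈ Finset.range n) ↦ hasDerivAt_term k
  convert! (hasDerivAt_neg x).exp.sub (hasDerivAt_sum.add_const 1) using 1
  · funext y
    simp [expNegRemainder, Finset.sum_range_succ']
  · rw [expNegRemainder, Finset.sum_neg_distrib]
    ring

theorem continuous_expNegRemainder (n : ℕ) : Continuous (expNegRemainder n) := by
  unfold expNegRemainder
  fun_prop

theorem expNegRemainder_isBigO_nhds_zero (n : ℕ) : expNegRemainder n =O[𝓝 0] (· ^ n) := by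
  have tendsto_neg : Tendsto (fun x : ℝ ↦ -x) (𝓝 0) (𝓝 0) := by
    simpa using (continuous_neg (G := ℝ)).tendsto 0
  refine ((Real.exp_sub_sum_range_isBigO_pow n).comp_tendsto tendsto_neg).trans ?_
  exact IsBigO.of_bound' (Eventually.of_forall fun x ↦ by simp)

theorem expNegRemainder_succ_isBigO_atTop (n : ℕ) : expNegRemainder (n + 1) =O[atTop] (· ^ n) := by
  refine IsBigO.sub ?_ (IsBigO.fun_sum fun k hk ↦ ?_)
  · simpa using (isLittleO_exp_neg_mul_rpow_atTop one_pos n).isBigO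
  · have pow_isBigO : (fun x : ℝ ↦ x ^ k) =O[atTop] (· ^ n) :=
      IsBigO.pow_of_le_right (eventually_ge_atTop 1) (Nat.lt_succ_iff.mp (Finset.mem_range.mp hk))
    refine IsBigO.trans ?_ (pow_isBigO.const_mul_left (k ! : ℝ)⁻¹)
    exact IsBigO.of_bound' (Eventually.of_forall fun x ↦ by simp [div_eq_inv_mul])

theorem mellinConvergent_expNegRemainder {n : ℕ} {s : ℂ} (hn : -(n : ℝ) < s.re)
    (hs : ∀ k < n, s.re < -(k : ℝ)) : MellinConvergent (fun x ↦ (expNegRemainder n x : ℂ)) s := by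
  have hlocal : LocallyIntegrableOn (fun x ↦ (expNegRemainder n x : ℂ)) (Ioi 0) :=
    (continuous_ofReal.comp (continuous_expNegRemainder n)).locallyIntegrable.locallyIntegrableOn _
  have hbot : (fun x ↦ (expNegRemainder n x : ℂ)) =O[𝓝[>] 0] (· ^ (-(-n : ℝ))) := by
    simpa using ((expNegRemainder_isBigO_nhds_zero n).mono nhdsWithin_le_nhds)
  cases n with
  | zero =>
    refine mellinConvergent_of_isBigO_rpow_exp one_pos hlocal ?_ hbot hn
    simpa [expNegRemainder] using
      isBigO_ofReal_left.mpr (isBigO_refl (fun x ↦ Real.exp (-x)) atTop)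
  | succ n =>
    refine mellinConvergent_of_isBigO_rpow hlocal ?_ (hs n n.lt_succ_self) hbot hn
    simpa using expNegRemainder_succ_isBigO_atTop n

theorem mellin_expNegRemainder {n : ℕ} {s : ℂ} (hn : -(n : ℝ) < s.re)
    (hs : ∀ k < n, s.re < -(k : ℝ)) : mellin (fun x ↦ (expNegRemainder n x : ℂ)) s = Gamma s := by
  induction n generalizing s with
  | zero =>
    rw [Gamma_eq_integral (by simpa using hn), GammaIntegral_eq_mellin]
    simp [expNegRemainder]
  | succ n ih =>
    have hn' : -(n : ℝ) < (s + 1).re := by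
      rw [add_re, one_re]; push_cast at hn; linarith
    have hs' : ∀ k < n, (s + 1).re < -(k : ℝ) := fun k hk ↦ by
      have s_re_lt := hs (k + 1) (by lia)
      rw [add_re, one_re]; push_cast at s_re_lt; linarith
    have s_ne_zero : s ≠ 0 := by
      rintro rfl
      simpa using hs 0 n.succ_pos
    have hderiv (x : ℝ) (_ : 0 < x) : HasDerivAt (fun x ↦ (expNegRemainder (n + 1) x : ℂ))
        ((-1 : ℂ) • (expNegRemainder n x : ℂ)) x := by
      simpa using (hasDerivAt_expNegRemainder_succ n x).ofReal_comp
    have hmellin := mellin_add_one_of_hasDerivAt hderiv (mellinConvergent_expNegRemainder hn hs)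
      ((mellinConvergent_expNegRemainder hn' hs').const_smul (-1 : ℂ))
    rw [mellin_const_smul, ih hn' hs', Gamma_add_one s s_ne_zero] at hmellin
    simpa [s_ne_zero] using hmellin.symm

section VerticalIntegrable

theorem norm_Gamma_le_Gamma_re {s : ℂ} (hs : 0 < s.re) : ‖Gamma s‖ ≤ Real.Gamma s.re := by
  rw [Gamma_eq_integral hs, GammaIntegral, Real.Gamma_eq_integral hs]
  refine (norm_integral_le_integral_norm _).trans_eq ?_
  refine setIntegral_congr_fun measurableSet_Ioi fun x hx ↦ ?_
  simp [norm_cpow_eq_rpow_re_of_pos hx, -ofReal_exp]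

theorem norm_Gamma_le_div_norm_sq {s : ℂ} (hs : 0 < s.re) :
    ‖Gamma s‖ ≤ Real.Gamma (s.re + 2) / ‖s‖ ^ 2 := by
  have s_ne_zero : s ≠ 0 := ne_of_apply_ne re hs.ne'
  have s_add_one_ne_zero : s + 1 ≠ 0 := ne_of_apply_ne re (add_pos hs one_pos).ne'
  have norm_le : ‖s‖ ≤ ‖s + 1‖ := by
    rw [← sq_le_sq₀ (norm_nonneg _) (norm_nonneg _), ← normSq_eq_norm_sq, ← normSq_eq_norm_sq,
      normSq_apply, normSq_apply, add_re, add_im, one_re, one_im]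
    linarith
  rw [le_div_iff₀' (by positivity)]
  calc ‖s‖ ^ 2 * ‖Gamma s‖
      = ‖s‖ * (‖s‖ * ‖Gamma s‖) := by ring
    _ ≤ ‖s + 1‖ * (‖s‖ * ‖Gamma s‖) := by gcongr
    _ = ‖Gamma (s + 1 + 1)‖ := by
      rw [Gamma_add_one _ s_add_one_ne_zero, Gamma_add_one _ s_ne_zero, norm_mul, norm_mul]
    _ ≤ Real.Gamma (s + 1 + 1).re := norm_Gamma_le_Gamma_re (add_pos (add_pos hs one_pos) one_pos)
    _ = Real.Gamma (s.re + 2) := by rw [add_re, add_re, one_re, add_assoc, one_add_one_eq_two]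

theorem verticalIntegrable_inv_norm_sq {σ : ℝ} (hσ : σ ≠ 0) :
    VerticalIntegrable (fun s ↦ (‖s‖ ^ 2)⁻¹) σ := by
  refine ((integrable_inv_one_add_sq.comp_div hσ).const_mul (σ ^ 2)⁻¹).congr
    (Eventually.of_forall fun t ↦ ?_)
  simp only [← normSq_eq_norm_sq, normSq_add_mul_I]
  field_simp

theorem verticalIntegrable_Gamma_of_pos {σ : ℝ} (hσ : 0 < σ) : VerticalIntegrable Gamma σ := by
  have hcont : Continuous fun t : ℝ ↦ Gamma (σ + t * I) := by
    refine continuous_iff_continuousAt.mpr fun t ↦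
      (continuousAt_Gamma _ fun m ↦ ne_of_apply_ne re ?_).comp (f := fun t : ℝ ↦ (σ + t * I : ℂ))
        (by fun_prop)
    simpa using (by linarith [m.cast_nonneg (α := ℝ)] : σ ≠ -m)
  refine ((verticalIntegrable_inv_norm_sq hσ.ne').const_mul (Real.Gamma (σ + 2))).mono'
    hcont.aestronglyMeasurable (Eventually.of_forall fun t ↦ ?_)
  simpa [div_eq_mul_inv] using norm_Gamma_le_div_norm_sq (s := σ + t * I) (by simpa)

theorem verticalIntegrable_div_id {f : ℂ → ℂ} {σ : ℝ} (hσ : σ ≠ 0)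
    (hf : VerticalIntegrable f σ) : VerticalIntegrable (fun s ↦ f s / s) σ := by
  have ne_zero (t : ℝ) : (σ + t * I : ℂ) ≠ 0 := ne_of_apply_ne re (by simpa)
  refine hf.mul_bdd (c := |σ|⁻¹) (Continuous.aestronglyMeasurable ?_)
    (Eventually.of_forall fun t ↦ ?_)
  · exact Continuous.inv₀ (by fun_prop) ne_zero
  · rw [norm_inv]
    gcongr
    simpa using abs_re_le_norm (σ + t * I)

theorem verticalIntegrable_mul_cpow_neg {f : ℂ → ℂ} {σ : ℝ} (hf : VerticalIntegrable f σ) {x : ℝ}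
    (hx : 0 < x) : VerticalIntegrable (fun s ↦ f s * (x : ℂ) ^ (-s)) σ := by
  refine hf.mul_bdd (c := x ^ (-σ)) (Continuous.aestronglyMeasurable ?_)
    (Eventually.of_forall fun t ↦ ?_)
  · exact Continuous.const_cpow (by fun_prop) (Or.inl (ofReal_ne_zero.mpr hx.ne'))
  · simp [norm_cpow_eq_rpow_re_of_pos hx]

theorem verticalIntegrable_Gamma {σ : ℝ} (hσ : ∀ k : ℕ, σ ≠ -k) : VerticalIntegrable Gamma σ := by
  obtain ⟨n, hn⟩ := exists_nat_gt (-σ)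
  induction n generalizing σ with
  | zero => exact verticalIntegrable_Gamma_of_pos (by simpa using hn)
  | succ n ih =>
    have σ_ne_zero : σ ≠ 0 := by simpa using hσ 0
    have hshift : VerticalIntegrable (fun s ↦ Gamma (s + 1)) σ := by
      simpa [VerticalIntegrable, add_right_comm] using
        ih (σ := σ + 1) (fun k hk ↦ hσ (k + 1) (by push_cast; linarith))
          (by push_cast at hn; linarith)
    refine (verticalIntegrable_div_id σ_ne_zero hshift).congr (Eventually.of_forall fun t ↦ ?_)
    have s_ne_zero : (σ + t * I : ℂ) ≠ 0 := ne_of_apply_ne re (by simpa)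
    simp only [Gamma_add_one _ s_ne_zero, mul_div_cancel_left₀ _ s_ne_zero]

end VerticalIntegrable

theorem inverse_mellin_Gamma_general {x : ℝ} (hx : 0 < x) {n : ℕ} {c : ℝ} (hn : -(n : ℝ) < c)
    (hc : ∀ k < n, c < -(k : ℝ)) :
    Integrable (fun t : ℝ ↦ Gamma ((c : ℂ) + t * I) * (x : ℂ) ^ (-((c : ℂ) + t * I))) ∧
    (expNegRemainder n x : ℂ) =
      (1 / (2 * Real.pi)) * ∫ t : ℝ, Gamma ((c : ℂ) + t * I) * (x : ℂ) ^ (-((c : ℂ) + t * I)) := by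
  have hΓ : VerticalIntegrable Gamma c := verticalIntegrable_Gamma fun k hk ↦ by
    rcases lt_or_ge k n with hkn | hnk
    · exact (hc k hkn).ne hk
    · linarith [(Nat.cast_le (α := ℝ)).mpr hnk]
  have hmellin (t : ℝ) :
      mellin (fun x ↦ (expNegRemainder n x : ℂ)) (c + t * I) = Gamma (c + t * I) :=
    mellin_expNegRemainder (by simpa using hn) (by simpa using hc)
  refine ⟨verticalIntegrable_mul_cpow_neg hΓ hx, ?_⟩
  rw [← mellinInv_mellin_eq c (fun x ↦ (expNegRemainder n x : ℂ)) hx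
    (mellinConvergent_expNegRemainder (by simpa using hn) (by simpa using hc))
    (hΓ.congr (Eventually.of_forall fun t ↦ (hmellin t).symm))
    (continuous_ofReal.comp (continuous_expNegRemainder n)).continuousAt]
  simp only [mellinInv, hmellin, smul_eq_mul, mul_comm (Gamma _), real_smul]
  push_cast
  rfl

theorem inverse_mellin_Gamma (x : ℝ) (hx : 0 < x) (c : ℝ) (hc1 : -1 < c) (hc2 : c < 0) :
    MeasureTheory.Integrable
      (fun t : ℝ => Complex.Gamma ((c : ℂ) + t * I) * (x : ℂ) ^ (-((c : ℂ) + t * I))) ∧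
    ((Real.exp (-x) : ℝ) : ℂ) - 1 =
      (1 / (2 * Real.pi)) *
        ∫ t : ℝ, Complex.Gamma ((c : ℂ) + t * I) * (x : ℂ) ^ (-((c : ℂ) + t * I)) := by
  simpa [expNegRemainder] using inverse_mellin_Gamma_general hx (n := 1) (c := c)
    (by simpa using hc1) (by simpa using hc2)
end
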